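/- arXiv:2112.09846 — 4 statements merged into one kernel-verified Lean document; each statement's English description precedes it below -/
import Mathlib

section
/- Let A be a commutative ring, B a commutative A-algebra, d ≥ 1 an integer, and b, c : Fin d → B two d-tuples of elements of B. If there exist indices i ≠ j with c i = c j, then Σ_{t ∈ O(b)} (t 0 * c 0) ∧ (t 1 * c 1) ∧ ⋯ ∧ (t (d-1) * c (d-1)) = 0 in the d-th exterior power ⋀[A]^d B of B regarded as an A-module. -/
open scoped Classical

/-!
The transposition of two positions where `c` agrees acts on the orbit of `b` by precomposition.
It negates every term of the sum, by antisymmetry, and the terms indexed by its fixed points vanish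
because they have two equal factors. Treating fixed points separately, rather than concluding from
`s = -s`, makes the argument valid also when `2` is not invertible.
-/

section SwapCancellation

variable {R M N ι α β : Type*} [Semiring R] [AddCommMonoid M] [Module R M] [AddCommGroup N]
  [Module R N] [DecidableEq ι] (f : M [⋀^ι]→ₗ[R] N) (op : α → β → M) {c : ι → β} {i j : ι}

theorem alternatingMap_op_comp_swap (hij : i ≠ j) (hc : c i = c j) (t : ι → α) :
    f (fun k => op ((t ∘ Equiv.swap i j) k) (c k)) = -f (fun k => op (t k) (c k)) := by
  rw [← f.map_swap _ hij]
  congr 1 with k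
  simp only [Function.comp_apply, Equiv.apply_swap_eq_self hc]

theorem sum_alternatingMap_op_eq_zero_of_comp_swap_mem (hij : i ≠ j) (hc : c i = c j)
    {S : Finset (ι → α)} (hS : ∀ t ∈ S, t ∘ Equiv.swap i j ∈ S) :
    ∑ t ∈ S, f (fun k => op (t k) (c k)) = 0 := by
  refine Finset.sum_involution (fun t _ => t ∘ Equiv.swap i j) (fun t _ => ?cancel)
    (fun t _ => mt fun hfixed => ?fixed) hS (fun t _ => ?involutive)
  case cancel => rw [alternatingMap_op_comp_swap f op hij hc, add_neg_cancel]
  case fixed =>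
    have ht : t j = t i := by simpa using congrFun hfixed i
    exact f.map_eq_zero_of_eq _ (congrArg₂ op ht.symm hc) hij
  case involutive => ext k; simp only [Function.comp_apply, Equiv.swap_apply_self]

end SwapCancellation

section PermOrbit

variable {ι α : Type*} [Fintype ι] [DecidableEq ι] [DecidableEq α]

/-- The orbit `O(b)` of a tuple `b` under permutation of its entries. It is a `Finset`, so that a
sum over it counts each distinct rearrangement once, whatever the stabilizer of `b`. -/
def permOrbit (b : ι → α) : Finset (ι → α) :=
  Finset.univ.image fun σ : Equiv.Perm ι => b ∘ σ

theorem mem_permOrbit {b t : ι → α} : t ∈ permOrbit b ↔ ∃ σ : Equiv.Perm ι, b ∘ σ = t := by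
  simp [permOrbit]

theorem comp_perm_mem_permOrbit {b t : ι → α} (ht : t ∈ permOrbit b) (τ : Equiv.Perm ι) :
    t ∘ τ ∈ permOrbit b := by
  obtain ⟨σ, rfl⟩ := mem_permOrbit.1 ht
  exact mem_permOrbit.2 ⟨σ * τ, rfl⟩

end PermOrbit

theorem orbit_sum_wedge_eq_zero_of_eq_general {R M N ι α β : Type*} [Semiring R]
    [AddCommMonoid M] [Module R M] [AddCommGroup N] [Module R N] [Fintype ι] [DecidableEq ι]
    [DecidableEq α] (f : M [⋀^ι]→ₗ[R] N) (op : α → β → M) (b : ι → α) (c : ι → β)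
    (h : ∃ i j : ι, i ≠ j ∧ c i = c j) :
    ∑ t ∈ permOrbit b, f (fun i => op (t i) (c i)) = 0 := by
  obtain ⟨i, j, hij, hc⟩ := h
  exact sum_alternatingMap_op_eq_zero_of_comp_swap_mem f op hij hc fun _ ht =>
    comp_perm_mem_permOrbit ht (Equiv.swap i j)

/-- The orbit sum of wedges `∑_{t ∈ O(b)} (t 0 * c 0) ∧ ⋯ ∧ (t (d-1) * c (d-1))`
vanishes in `⋀[A]^d B` as soon as two of the `c i` coincide: the multilinear map
underlying the action of symmetric tensors on the top exterior power is alternating. -/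
theorem orbit_sum_wedge_eq_zero_of_eq {A B : Type*} [CommRing A] [CommRing B] [Algebra A B]
    (d : ℕ) (hd : 1 ≤ d) (b c : Fin d → B)
    (h : ∃ i j : Fin d, i ≠ j ∧ c i = c j) :
    ∑ t ∈ Finset.univ.image (fun σ : Equiv.Perm (Fin d) => b ∘ σ),
      ExteriorAlgebra.ιMulti A d (fun i => t i * c i) = 0 :=
  orbit_sum_wedge_eq_zero_of_eq_general (ExteriorAlgebra.ιMulti A d) (· * ·) b c h
end

section
/- Let A be a commutative ring, B a commutative A-algebra, d ≥ 1 an integer, and b, c : Fin d → B. Then for every permutation σ of Fin d, Σ_{t ∈ O(b)} (t 0 * (c ∘ σ) 0) ∧ ⋯ ∧ (t (d-1) * (c ∘ σ) (d-1)) = sign(σ) · Σ_{t ∈ O(b)} (t 0 * c 0) ∧ ⋯ ∧ (t (d-1) * c (d-1)) in ⋀[A]^d B. -/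
open scoped Classical

/-! Substituting `t ↦ t ∘ σ` permutes the orbit `O(b)`, and afterwards `σ` reindexes the whole tuple
of products `t i * c i` rather than `c` alone; an alternating map turns that into `sign σ`. -/

theorem sum_comp_of_mapsTo_of_injOn {α N : Type*} [AddCommMonoid N] {s : Finset α} {e : α → α}
    (maps : Set.MapsTo e s s) (inj : Set.InjOn e s) (F : α → N) :
    ∑ x ∈ s, F (e x) = ∑ x ∈ s, F x :=
  Finset.sum_nbij e maps inj (Finset.surjOn_of_injOn_of_card_le e maps inj le_rfl) fun _ _ ↦ rfl

theorem mapsTo_comp_perm_image_comp_perm {ι X : Type*} [Fintype (Equiv.Perm ι)]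
    [DecidableEq (ι → X)] (b : ι → X) (σ : Equiv.Perm ι) :
    Set.MapsTo (· ∘ σ) (Finset.univ.image fun τ : Equiv.Perm ι ↦ b ∘ τ : Set (ι → X))
      (Finset.univ.image fun τ : Equiv.Perm ι ↦ b ∘ τ) := by
  intro t ht
  obtain ⟨τ, -, rfl⟩ := Finset.mem_image.1 ht
  exact Finset.mem_image.2 ⟨τ * σ, Finset.mem_univ _, rfl⟩

theorem orbit_sum_wedge_comp_perm_general {R M N ι X Y : Type*} [Semiring R]
    [AddCommMonoid M] [Module R M] [AddCommGroup N] [Module R N] [Fintype ι] [DecidableEq ι]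
    (g : M [⋀^ι]→ₗ[R] N) (f : X → Y → M) {s : Finset (ι → X)} {σ : Equiv.Perm ι}
    (maps : Set.MapsTo (· ∘ σ) (s : Set (ι → X)) s) (c : ι → Y) :
    ∑ t ∈ s, g (fun i ↦ f (t i) ((c ∘ σ) i)) =
      Equiv.Perm.sign σ • ∑ t ∈ s, g (fun i ↦ f (t i) (c i)) :=
  calc
    ∑ t ∈ s, g (fun i ↦ f (t i) ((c ∘ σ) i))
    _ = ∑ t ∈ s, g ((fun i ↦ f (t i) (c i)) ∘ σ) :=
      (sum_comp_of_mapsTo_of_injOn maps σ.surjective.injective_comp_right.injOn _).symm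
    _ = Equiv.Perm.sign σ • ∑ t ∈ s, g (fun i ↦ f (t i) (c i)) := by
      simp only [g.map_perm, Finset.smul_sum]

/-- Antisymmetry of the orbit sum of wedges: permuting the tuple `c` by `σ` multiplies
`∑_{t ∈ O(b)} (t 0 * c 0) ∧ ⋯ ∧ (t (d-1) * c (d-1))` by the sign of `σ`. -/
theorem orbit_sum_wedge_comp_perm {A B : Type*} [CommRing A] [CommRing B] [Algebra A B]
    (d : ℕ) (hd : 1 ≤ d) (b c : Fin d → B) (σ : Equiv.Perm (Fin d)) :
    ∑ t ∈ Finset.univ.image (fun τ : Equiv.Perm (Fin d) => b ∘ τ),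
      ExteriorAlgebra.ιMulti A d (fun i => t i * (c ∘ σ) i) =
    (Equiv.Perm.sign σ : ℤ) •
      ∑ t ∈ Finset.univ.image (fun τ : Equiv.Perm (Fin d) => b ∘ τ),
        ExteriorAlgebra.ιMulti A d (fun i => t i * c i) :=
  orbit_sum_wedge_comp_perm_general (ExteriorAlgebra.ιMulti A d) (· * ·)
    (mapsTo_comp_perm_image_comp_perm b σ) c
end

section
/- Let K be a field and B a local finite-dimensional commutative K-algebra whose residue field is K; set d = dim_K B and let ε : B → K be the unique K-algebra homomorphism. Let (e_1, …, e_d) be any K-basis of B. Then for every function f : Fin d → Fin d with S_d-orbit Γ (under precomposition by permutations), and for all c : Fin d → B, one has Σ_{g ∈ Γ} (e_{g(0)} * c 0) ∧ ⋯ ∧ (e_{g(d-1)} * c (d-1)) = |Γ| · ε(e_{f(0)} ⋯ e_{f(d-1)}) • (c 0 ∧ ⋯ ∧ c (d-1)) in ⋀[K]^d B, where |Γ| is the cardinality of the orbit Γ. -/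
open scoped Classical

/-!
Since `ker ε` is nilpotent, there is a basis `b` on which every `x` acts by a triangular matrix
with all diagonal entries `ε x`. Hence `x 0 • b 0 ∧ ⋯ ∧ x (d-1) • b (d-1)` equals
`∏ i, ε (x i)` times `b 0 ∧ ⋯ ∧ b (d-1)`. This is false for a general family `c` in place of `b`,
but the sum over a permutation orbit is alternating in `c`, so it suffices to compare both sides
at `c = b`.
-/

section Alternating

variable {K M N : Type*} [CommRing K] [AddCommGroup M] [Module K M] [AddCommGroup N] [Module K N]

theorem alternatingMap_eq_of_apply_basis_eq {ι : Type*} [Finite ι] (b : Module.Basis ι K M)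
    {ω η : M [⋀^ι]→ₗ[K] N} (h : ω b = η b) : ω = η := by
  have := Fintype.ofFinite ι
  refine b.ext_alternating fun v hv => ?_
  let σ : Equiv.Perm ι := Equiv.ofBijective v (Finite.injective_iff_bijective.1 hv)
  change ω (b ∘ σ) = η (b ∘ σ)
  rw [ω.map_perm, η.map_perm, h]

theorem alternatingMap_apply_eq_det_smul {ι : Type*} [Fintype ι] [DecidableEq ι]
    (b : Module.Basis ι K M) (ω : M [⋀^ι]→ₗ[K] N) (v : ι → M) : ω v = b.det v • ω b := by
  have h : ω = (LinearMap.toSpanSingleton K N (ω b)).compAlternatingMap b.det :=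
    alternatingMap_eq_of_apply_basis_eq b (by simp [b.det_self])
  exact DFunLike.congr_fun h v

theorem basis_det_eq_prod_of_sub_smul_mem_flag {n : ℕ} (b : Module.Basis (Fin n) K M)
    {v : Fin n → M} {a : Fin n → K} (h : ∀ i, v i - a i • b i ∈ b.flag i.castSucc) :
    b.det v = ∏ i, a i := by
  have coord_eq {i j : Fin n} (hij : i ≤ j) : b.toMatrix v j i = b.repr (a i • b i) j := by
    have := b.flag_le_ker_coord (Fin.castSucc_le_castSucc_iff.2 hij) (h i)
    rwa [LinearMap.mem_ker, map_sub, sub_eq_zero] at this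
  rw [b.det_apply, Matrix.det_of_isUpperTriangular]
  · exact Finset.prod_congr rfl fun i _ => by simp [coord_eq le_rfl]
  · intro j i (hij : i < j)
    simp [coord_eq hij.le, hij.ne]

variable {ι κ P : Type*} [AddCommGroup P] [Module K P]

/-- The alternating map `∑ g ∈ Γ, ω ∘ (φ (g i))ᵢ`, that is, `ω` composed with the symmetric tensor
`∑ g ∈ Γ, ⨂ i, φ (g i)` of linear maps. The set `Γ` of index families is required to be stable
under permutations of `ι`, which is what makes the tensor symmetric and the result alternating. -/
def symmetricTensorComp (ω : P [⋀^ι]→ₗ[K] N) (φ : κ → M →ₗ[K] P) (Γ : Finset (ι → κ))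
    (hΓ : ∀ g ∈ Γ, ∀ σ : Equiv.Perm ι, g ∘ σ ∈ Γ) : M [⋀^ι]→ₗ[K] N where
  toMultilinearMap := ∑ g ∈ Γ, ω.toMultilinearMap.compLinearMap fun i => φ (g i)
  map_eq_zero_of_eq' c i j hc hij := by
    have comp_swap_eq (g : ι → κ) : (fun k => φ ((g ∘ Equiv.swap i j) k) (c k)) =
        (fun k => φ (g k) (c k)) ∘ Equiv.swap i j := by
      funext k
      simp only [Function.comp_apply, Equiv.apply_swap_eq_self hc k]
    simp only [MultilinearMap.toFun_eq_coe, sum_apply,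
      MultilinearMap.compLinearMap_apply, AlternatingMap.coe_multilinearMap]
    refine Finset.sum_involution (fun g _ => g ∘ Equiv.swap i j) ?cancel ?no_fixed
      (fun g hg => hΓ g hg _) (fun g _ => by ext; simp)
    case cancel =>
      intro g _
      rw [comp_swap_eq, ω.map_swap _ hij, add_neg_cancel]
    case no_fixed =>
      intro g _ hne hfix
      have hg : g i = g j := by simpa using (congrFun hfix i).symm
      exact hne (ω.map_eq_zero_of_eq _ (by rw [hg, hc]) hij)

theorem symmetricTensorComp_apply (ω : P [⋀^ι]→ₗ[K] N) (φ : κ → M →ₗ[K] P)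
    (Γ : Finset (ι → κ)) (hΓ : ∀ g ∈ Γ, ∀ σ : Equiv.Perm ι, g ∘ σ ∈ Γ) (c : ι → M) :
    symmetricTensorComp ω φ Γ hΓ c = ∑ g ∈ Γ, ω fun i => φ (g i) (c i) :=
  sum_apply Γ (fun g => ω.toMultilinearMap.compLinearMap fun i => φ (g i)) c

end Alternating

theorem isNilpotent_ker_of_isLocalRing {B S : Type*} [CommRing B] [IsArtinianRing B]
    [IsLocalRing B] [Semiring S] [Nontrivial S] (φ : B →+* S) : IsNilpotent (RingHom.ker φ) := by
  obtain ⟨n, hn⟩ := (isArtinianRing_iff_isNilpotent_maximalIdeal B).1 inferInstance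
  have hker : RingHom.ker φ ≤ IsLocalRing.maximalIdeal B :=
    IsLocalRing.le_maximalIdeal (RingHom.ker_ne_top φ)
  exact ⟨n, le_bot_iff.1 ((Ideal.pow_right_mono hker n).trans_eq hn)⟩

theorem exists_notMem_forall_smul_mem_of_isNilpotent {R M : Type*} [CommSemiring R]
    [AddCommMonoid M] [Module R M] {I : Ideal R} (hI : IsNilpotent I) {S : Set M} (hzero : 0 ∈ S)
    (hS : S ≠ Set.univ) : ∃ v ∉ S, ∀ x ∈ I, x • v ∈ S := by
  by_contra! h
  -- Otherwise multiplying repeatedly by elements of `I` could stay outside `S` forever.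
  have mem_of_pow_smul_mem (n : ℕ) : ∀ v, (∀ x ∈ I ^ n, x • v ∈ S) → v ∈ S := by
    induction n with
    | zero => exact fun v hv => by simpa using hv 1 (by simp)
    | succ n ih =>
      refine fun v hv => ih v fun y hy => ?_
      by_contra hyv
      obtain ⟨x, hx, hxyv⟩ := h _ hyv
      refine hxyv ?_
      rw [smul_smul]
      exact hv _ (pow_succ' I n ▸ Ideal.mul_mem_mul hx hy)
  obtain ⟨n, hn⟩ := hI
  refine hS (Set.eq_univ_of_forall fun v => mem_of_pow_smul_mem n v fun x hx => ?_)
  rw [hn, Ideal.zero_eq_bot, Ideal.mem_bot] at hx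
  rwa [hx, zero_smul]

section Triangular

variable {K R M N : Type*} [Field K] [CommRing R] [Algebra K R]
  [AddCommGroup M] [Module K M] [Module R M] [IsScalarTower K R M] [AddCommGroup N] [Module K N]
  {ε : R →ₐ[K] K}

theorem exists_notMem_forall_smul_sub_mem (hε : IsNilpotent (RingHom.ker ε)) {S : Submodule K M}
    (hS : S ≠ ⊤) : ∃ v ∉ S, ∀ x : R, x • v - ε x • v ∈ S := by
  obtain ⟨v, hv, hker⟩ := exists_notMem_forall_smul_mem_of_isNilpotent hε S.zero_mem
    (S := (S : Set M)) (by simpa using hS)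
  refine ⟨v, hv, fun x => ?_⟩
  have hx : x - algebraMap K R (ε x) ∈ RingHom.ker ε := by simp [RingHom.mem_ker]
  simpa [sub_smul] using hker _ hx

theorem exists_linearIndependent_triangular (hε : IsNilpotent (RingHom.ker ε)) {n : ℕ}
    (hn : n ≤ Module.finrank K M) :
    ∃ b : Fin n → M, LinearIndependent K b ∧
      ∀ (x : R) i, x • b i - ε x • b i ∈ Submodule.span K (b '' Set.Iio i) := by
  induction n with
  | zero => exact ⟨Fin.elim0, linearIndependent_empty_type, fun x i => i.elim0⟩
  | succ n ih =>
    obtain ⟨b, hb, htri⟩ := ih (by lia)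
    have hspan : Submodule.span K (Set.range b) ≠ ⊤ := by
      intro htop
      have hcard := finrank_span_eq_card hb
      rw [htop, finrank_top, Fintype.card_fin] at hcard
      lia
    obtain ⟨v, hv, hvtri⟩ := exists_notMem_forall_smul_sub_mem hε hspan
    refine ⟨Fin.snoc b v, linearIndependent_finSnoc.2 ⟨hb, hv⟩, fun x i => ?_⟩
    induction i using Fin.lastCases with
    | last =>
      rw [Fin.snoc_last]
      refine Submodule.span_mono ?_ (hvtri x)
      rintro _ ⟨j, rfl⟩
      exact ⟨j.castSucc, Fin.castSucc_lt_last j, Fin.snoc_castSucc ..⟩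
    | cast i =>
      rw [Fin.snoc_castSucc]
      refine Submodule.span_mono ?_ (htri x i)
      rintro _ ⟨j, hj, rfl⟩
      exact ⟨j.castSucc, Fin.castSucc_lt_castSucc_iff.2 hj, Fin.snoc_castSucc ..⟩

variable [FiniteDimensional K M] {d : ℕ}

theorem exists_basis_triangular (hε : IsNilpotent (RingHom.ker ε))
    (hd : Module.finrank K M = d) :
    ∃ b : Module.Basis (Fin d) K M,
      ∀ (x : R) i, x • b i - ε x • b i ∈ b.flag i.castSucc := by
  obtain ⟨b, hb, htri⟩ := exists_linearIndependent_triangular hε hd.ge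
  refine ⟨basisOfLinearIndependentOfCardEqFinrank' b hb (by simp [hd]), fun x i => ?_⟩
  rw [Module.Basis.flag, coe_basisOfLinearIndependentOfCardEqFinrank']
  exact htri x i

theorem sum_alternatingMap_smul_eq_sum_prod_smul {κ : Type*} (hε : IsNilpotent (RingHom.ker ε))
    (hd : Module.finrank K M = d) (e : κ → R) {Γ : Finset (Fin d → κ)}
    (hΓ : ∀ g ∈ Γ, ∀ σ : Equiv.Perm (Fin d), g ∘ σ ∈ Γ) (ω : M [⋀^Fin d]→ₗ[K] N)
    (c : Fin d → M) :
    ∑ g ∈ Γ, ω (fun i => e (g i) • c i) = (∑ g ∈ Γ, ∏ i, ε (e (g i))) • ω c := by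
  obtain ⟨b, hb⟩ := exists_basis_triangular (M := M) hε hd
  have hbasis (x : Fin d → R) : ω (fun i => x i • b i) = (∏ i, ε (x i)) • ω b := by
    rw [alternatingMap_apply_eq_det_smul b,
      basis_det_eq_prod_of_sub_smul_mem_flag b fun i => hb (x i) i]
  have h : symmetricTensorComp ω (fun k => Algebra.lsmul K K M (e k)) Γ hΓ =
      (∑ g ∈ Γ, ∏ i, ε (e (g i))) • ω := by
    apply alternatingMap_eq_of_apply_basis_eq b
    simp only [symmetricTensorComp_apply, Algebra.lsmul_coe, hbasis, AlternatingMap.smul_apply,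
      ← Finset.sum_smul]
  simpa only [symmetricTensorComp_apply, Algebra.lsmul_coe, AlternatingMap.smul_apply] using
     DFunLike.congr_fun h c

theorem orbit_sum_wedge_eq_card_smul_general {κ : Type*} [DecidableEq κ]
    (hε : IsNilpotent (RingHom.ker ε)) (hd : Module.finrank K M = d) (e : κ → R)
    (f : Fin d → κ) (Γ : Finset (Fin d → κ))
    (hΓ : Γ = Finset.univ.image (fun σ : Equiv.Perm (Fin d) => f ∘ σ))
    (ω : M [⋀^Fin d]→ₗ[K] N) (c : Fin d → M) :
    ∑ g ∈ Γ, ω (fun i => e (g i) • c i) = Γ.card • (ε (∏ i, e (f i)) • ω c) := by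
  have mem_orbit (g : Fin d → κ) : g ∈ Γ ↔ ∃ τ : Equiv.Perm (Fin d), f ∘ τ = g := by
    simp [hΓ]
  have stable : ∀ g ∈ Γ, ∀ σ : Equiv.Perm (Fin d), g ∘ σ ∈ Γ := by
    intro g hg σ
    obtain ⟨τ, rfl⟩ := (mem_orbit g).1 hg
    exact (mem_orbit _).2 ⟨τ * σ, rfl⟩
  have prod_eq : ∀ g ∈ Γ, ∏ i, ε (e (g i)) = ∏ i, ε (e (f i)) := by
    intro g hg
    obtain ⟨τ, rfl⟩ := (mem_orbit g).1 hg
    exact Equiv.prod_comp τ fun i => ε (e (f i))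
  rw [sum_alternatingMap_smul_eq_sum_prod_smul hε hd e stable ω c, Finset.sum_congr rfl prod_eq,
    Finset.sum_const, smul_assoc, map_prod]

end Triangular

/-- Lemma 2.2 of the paper: for a local finite `K`-algebra `B` of dimension `d` with residue
field `K`, with `ε : B → K` the unique `K`-algebra homomorphism and `(e_1, …, e_d)` a basis
of `B`, the orbit sum `∑_{g ∈ Γ} (e_{g 0} * c 0) ∧ ⋯ ∧ (e_{g (d-1)} * c (d-1))` equals
`|Γ| · ε(e_{f 0} ⋯ e_{f (d-1)}) • (c 0 ∧ ⋯ ∧ c (d-1))` in `⋀[K]^d B`. -/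
theorem orbit_sum_wedge_eq_card_smul {K B : Type*} [Field K] [CommRing B] [Algebra K B]
    [FiniteDimensional K B] [IsLocalRing B]
    (hres : Function.Bijective (⇑(IsLocalRing.residue B) ∘ ⇑(algebraMap K B)))
    (ε : B →ₐ[K] K) (hε : ∀ ε' : B →ₐ[K] K, ε' = ε)
    (d : ℕ) (hd : Module.finrank K B = d) (e : Module.Basis (Fin d) K B)
    (f : Fin d → Fin d) (Γ : Finset (Fin d → Fin d))
    (hΓ : Γ = Finset.univ.image (fun σ : Equiv.Perm (Fin d) => f ∘ σ))
    (c : Fin d → B) :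
    ∑ g ∈ Γ, ExteriorAlgebra.ιMulti K d (fun i => e (g i) * c i) =
      Γ.card • (ε (∏ i, e (f i)) • ExteriorAlgebra.ιMulti K d c) := by
  have : IsArtinianRing B := IsArtinianRing.of_finite K B
  have hker : IsNilpotent (RingHom.ker ε) := isNilpotent_ker_of_isLocalRing (ε : B →+* K)
  simpa only [smul_eq_mul] using
    orbit_sum_wedge_eq_card_smul_general hker hd e f Γ hΓ (ExteriorAlgebra.ιMulti K d) c
end

section
/- Let A be a commutative ring and let B₁, B₂ be commutative A-algebras that are free A-modules of finite ranks d₁ and d₂ respectively. Consider the A-algebra homomorphism Φ from the (d₁+d₂)-fold tensor power ⨂[A]^{d₁+d₂} (B₁ × B₂) to B₁^{⊗ d₁} ⊗_A B₂^{⊗ d₂} determined on pure tensors by x_0 ⊗ ⋯ ⊗ x_{d₁+d₂-1} ↦ (pr₁ x_0 ⊗ ⋯ ⊗ pr₁ x_{d₁-1}) ⊗ (pr₂ x_{d₁} ⊗ ⋯ ⊗ pr₂ x_{d₁+d₂-1}), where pr₁, pr₂ are the two projections of the product algebra B₁ × B₂. If an element z of ⨂[A]^{d₁+d₂} (B₁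 × B₂) is fixed by the action of every permutation of the d₁+d₂ tensor factors, then Φ(z) is fixed by the action of every permutation of the first d₁ tensor factors (acting on B₁^{⊗ d₁}) and of every permutation of the last d₂ tensor factors (acting on B₂^{⊗ d₂}). -/
open scoped TensorProduct

/-!
The map `f₁^{⊗ ι₁} ⊗ f₂^{⊗ ι₂}` is equivariant for `Perm ι₁ × Perm ι₂`, which acts on the source
as a Young subgroup of `Perm (ι₁ ⊕ ι₂)`. A tensor fixed by the whole symmetric group is fixed by
this subgroup, and hence so is its image.
-/

section TensorSplitMap

variable {R M N₁ N₂ ι ι₁ ι₂ : Type*} [CommSemiring R]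
  [AddCommMonoid M] [Module R M] [AddCommMonoid N₁] [Module R N₁] [AddCommMonoid N₂] [Module R N₂]

/-- The map `f₁^{⊗ ι₁} ⊗ f₂^{⊗ ι₂}` on the tensor power `M^{⊗ ι}`, where `e` says which factors
are sent through `f₁` and which through `f₂`. -/
noncomputable def tensorSplitMap (e : ι₁ ⊕ ι₂ ≃ ι) (f₁ : M →ₗ[R] N₁) (f₂ : M →ₗ[R] N₂) :
    (⨂[R] _ : ι, M) →ₗ[R] (⨂[R] _ : ι₁, N₁) ⊗[R] (⨂[R] _ : ι₂, N₂) :=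
  TensorProduct.map (PiTensorProduct.map fun _ => f₁) (PiTensorProduct.map fun _ => f₂) ∘ₗ
    (PiTensorProduct.tmulEquiv R M).symm.toLinearMap ∘ₗ
      (PiTensorProduct.reindex R (fun _ => M) e.symm).toLinearMap

variable (e : ι₁ ⊕ ι₂ ≃ ι) (f₁ : M →ₗ[R] N₁) (f₂ : M →ₗ[R] N₂)

theorem tensorSplitMap_tprod (x : ι → M) :
    tensorSplitMap e f₁ f₂ (PiTensorProduct.tprod R x) =
      (PiTensorProduct.tprod R fun i => f₁ (x (e (.inl i)))) ⊗ₜ[R]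
        (PiTensorProduct.tprod R fun i => f₂ (x (e (.inr i)))) := by
  simp [tensorSplitMap]

theorem eq_tensorSplitMap_of_tprod
    (Φ : (⨂[R] _ : ι, M) →ₗ[R] (⨂[R] _ : ι₁, N₁) ⊗[R] (⨂[R] _ : ι₂, N₂))
    (hΦ : ∀ x : ι → M, Φ (PiTensorProduct.tprod R x) =
      (PiTensorProduct.tprod R fun i => f₁ (x (e (.inl i)))) ⊗ₜ[R]
        (PiTensorProduct.tprod R fun i => f₂ (x (e (.inr i))))) :
    Φ = tensorSplitMap e f₁ f₂ :=
  PiTensorProduct.ext <| MultilinearMap.ext fun x =>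
    (hΦ x).trans (tensorSplitMap_tprod e f₁ f₂ x).symm

theorem tensorSplitMap_reindex_permCongr_sumCongr (σ₁ : Equiv.Perm ι₁) (σ₂ : Equiv.Perm ι₂)
    (z : ⨂[R] _ : ι, M) :
    tensorSplitMap e f₁ f₂
        (PiTensorProduct.reindex R (fun _ => M) (e.permCongr (σ₁.sumCongr σ₂)) z) =
      TensorProduct.map (PiTensorProduct.reindex R (fun _ => N₁) σ₁).toLinearMap
        (PiTensorProduct.reindex R (fun _ => N₂) σ₂).toLinearMap (tensorSplitMap e f₁ f₂ z) := by
  have symm_inl (i : ι₁) :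
      (e.permCongr (σ₁.sumCongr σ₂)).symm (e (.inl i)) = e (.inl (σ₁.symm i)) := by
    simp [Equiv.permCongr_def]
  have symm_inr (i : ι₂) :
      (e.permCongr (σ₁.sumCongr σ₂)).symm (e (.inr i)) = e (.inr (σ₂.symm i)) := by
    simp [Equiv.permCongr_def]
  induction z using PiTensorProduct.induction_on with
  | smul_tprod r x =>
    simp only [map_smul, PiTensorProduct.reindex_tprod, tensorSplitMap_tprod,
      TensorProduct.map_tmul, LinearEquiv.coe_coe]
    congr 3 <;> funext i
    · rw [symm_inl]
    · rw [symm_inr]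
  | add x y hx hy => simp only [map_add, hx, hy]

theorem map_symmetric_of_symmetric_general (z : ⨂[R] _ : ι, M)
    (hz : ∀ σ : Equiv.Perm ι, PiTensorProduct.reindex R (fun _ => M) σ z = z) :
    (∀ σ₁ : Equiv.Perm ι₁,
      TensorProduct.map (PiTensorProduct.reindex R (fun _ => N₁) σ₁).toLinearMap
        LinearMap.id (tensorSplitMap e f₁ f₂ z) = tensorSplitMap e f₁ f₂ z) ∧
    (∀ σ₂ : Equiv.Perm ι₂,
      TensorProduct.map LinearMap.id
        (PiTensorProduct.reindex R (fun _ => N₂) σ₂).toLinearMap (tensorSplitMap e f₁ f₂ z) =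
          tensorSplitMap e f₁ f₂ z) := by
  have fixed (σ₁ : Equiv.Perm ι₁) (σ₂ : Equiv.Perm ι₂) :
      TensorProduct.map (PiTensorProduct.reindex R (fun _ => N₁) σ₁).toLinearMap
        (PiTensorProduct.reindex R (fun _ => N₂) σ₂).toLinearMap (tensorSplitMap e f₁ f₂ z) =
          tensorSplitMap e f₁ f₂ z := by
    rw [← tensorSplitMap_reindex_permCongr_sumCongr, hz]
  refine ⟨fun σ₁ => ?_, fun σ₂ => ?_⟩
  · simpa only [PiTensorProduct.reindex_refl, LinearEquiv.refl_toLinearMap] using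
      fixed σ₁ (Equiv.refl ι₂)
  · simpa only [PiTensorProduct.reindex_refl, LinearEquiv.refl_toLinearMap] using
      fixed (Equiv.refl ι₁) σ₂

end TensorSplitMap

/-- Lemma 2.3 (first assertion) of the paper: the `A`-algebra homomorphism
`pr₁^{⊗ d₁} ⊗ pr₂^{⊗ d₂} : (B₁ × B₂)^{⊗(d₁+d₂)} → B₁^{⊗ d₁} ⊗_A B₂^{⊗ d₂}` carries
symmetric tensors to tensors symmetric in the first `d₁` and the last `d₂` factors. -/
theorem map_symmetric_of_symmetric {A B₁ B₂ : Type*} [CommRing A]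
    [CommRing B₁] [CommRing B₂] [Algebra A B₁] [Algebra A B₂]
    (d₁ d₂ : ℕ) [Module.Free A B₁] [Module.Free A B₂]
    [Module.Finite A B₁] [Module.Finite A B₂]
    (h₁ : Module.finrank A B₁ = d₁) (h₂ : Module.finrank A B₂ = d₂)
    (Φ : (⨂[A] _ : Fin (d₁ + d₂), (B₁ × B₂)) →ₐ[A]
      (⨂[A] _ : Fin d₁, B₁) ⊗[A] (⨂[A] _ : Fin d₂, B₂))
    (hΦ : ∀ x : Fin (d₁ + d₂) → B₁ × B₂,
      Φ (PiTensorProduct.tprod A x) =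
        (PiTensorProduct.tprod A fun i : Fin d₁ => (x (Fin.castAdd d₂ i)).1) ⊗ₜ[A]
          (PiTensorProduct.tprod A fun i : Fin d₂ => (x (Fin.natAdd d₁ i)).2))
    (z : ⨂[A] _ : Fin (d₁ + d₂), (B₁ × B₂))
    (hz : ∀ σ : Equiv.Perm (Fin (d₁ + d₂)),
      PiTensorProduct.reindex A (fun _ => B₁ × B₂) σ z = z) :
    (∀ σ₁ : Equiv.Perm (Fin d₁),
      TensorProduct.map (PiTensorProduct.reindex A (fun _ => B₁) σ₁).toLinearMap
        LinearMap.id (Φ z) = Φ z) ∧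
    (∀ σ₂ : Equiv.Perm (Fin d₂),
      TensorProduct.map LinearMap.id
        (PiTensorProduct.reindex A (fun _ => B₂) σ₂).toLinearMap (Φ z) = Φ z) := by
  rw [← AlgHom.toLinearMap_apply, eq_tensorSplitMap_of_tprod finSumFinEquiv
    (LinearMap.fst A B₁ B₂) (LinearMap.snd A B₁ B₂) Φ.toLinearMap hΦ]
  exact map_symmetric_of_symmetric_general _ _ _ z hz
end
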